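/- arXiv:2305.13074 — 2 statements merged into one kernel-verified Lean document; each statement's English description precedes it below -/
import Mathlib

section
/- Let B be a Boolean ring and let spec(B) denote the set of ring homomorphisms B → F₂, topologized as a subspace of the product space F₂^B where F₂ carries the discrete topology (this makes spec(B) a profinite space). Then the evaluation map B → C(spec(B), F₂), sending b to the continuous function f ↦ f(b), is a ring isomorphism onto the ring of continuous F₂-valued functions on spec(B). -/
/-- The field `F₂` with the discrete topology. -/
instance : TopologicalSpace (ZMod 2) := ⊥

instance : DiscreteTopology (ZMod 2) := ⟨rfl⟩

/-- For a Boolean ring `B`, `spec B = Hom(B, F₂)` carries the subspace topology from the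
product space `F₂ ^ B` (making it a profinite space). -/
instance specTopologicalSpace (B : Type*) [BooleanRing B] :
    TopologicalSpace (B →+* ZMod 2) :=
  TopologicalSpace.induced (fun f => (f : B → ZMod 2)) Pi.topologicalSpace

/-!
A homomorphism from a Boolean ring to `F₂` is determined by its kernel, and every prime ideal is
such a kernel, because a nontrivial quotient without zero divisors in which every element is
idempotent can only be `F₂`. Thus `spec B` is in bijection with the prime spectrum of `B`, with
`{f | f b = 1}` corresponding to the basic open set `D(b)`, which is clopen because `b` is
idempotent. A continuous `F₂`-valued function on `spec B` is the indicator of a clopen set, which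
therefore corresponds to a clopen set of the prime spectrum, and the clopen sets of the prime
spectrum of any commutative ring are the `D(e)`, each for a unique idempotent `e`.
-/

theorem zmod_two_eq_of_eq_one_iff : ∀ {a b : ZMod 2}, (a = 1 ↔ b = 1) → a = b := by
  decide

theorem zmod_two_ne_zero_iff_eq_one : ∀ {a : ZMod 2}, a ≠ 0 ↔ a = 1 := by
  decide

theorem continuous_zmod_two_iff_isClopen {X : Type*} [TopologicalSpace X] {g : X → ZMod 2} :
    Continuous g ↔ IsClopen (g ⁻¹' {1}) := by
  refine ⟨(isClopen_discrete _).preimage, fun hg => continuous_discrete_rng.2 fun a => ?_⟩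
  obtain rfl | ha := eq_or_ne a 1
  · exact hg.isOpen
  · have hcompl : g ⁻¹' {a} = (g ⁻¹' {1})ᶜ := by
      have eq_iff_ne_one : ∀ a c : ZMod 2, a ≠ 1 → (c = a ↔ c ≠ 1) := by decide
      exact Set.ext fun x => eq_iff_ne_one a (g x) ha
    exact hcompl ▸ hg.compl.isOpen

theorem ker_ringHom_zmod_two_injective {R : Type*} [Semiring R] :
    Function.Injective (RingHom.ker : (R →+* ZMod 2) → Ideal R) := by
  intro f g hfg
  ext x
  have hx : f x = 0 ↔ g x = 0 := by
    rw [← RingHom.mem_ker, hfg, RingHom.mem_ker]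
  refine zmod_two_eq_of_eq_one_iff ?_
  rw [← zmod_two_ne_zero_iff_eq_one, ← zmod_two_ne_zero_iff_eq_one, Ne, Ne, hx]

theorem nonempty_ringEquiv_zmod_two_of_isIdempotentElem {R : Type*} [Ring R] [IsDomain R]
    (h : ∀ x : R, IsIdempotentElem x) : Nonempty (R ≃+* ZMod 2) := by
  have hone : (1 : R) = -1 := by simpa only [neg_mul_neg, one_mul] using (h (-1)).eq
  have htwo : (2 : R) = 0 := by rw [← one_add_one_eq_two, ← eq_neg_iff_add_eq_zero, ← hone]
  have : CharP R 2 := CharTwo.of_one_ne_zero_of_two_eq_zero one_ne_zero htwo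
  have hsurj : Function.Surjective (ZMod.castHom (dvd_refl 2) R) := by
    intro x
    obtain rfl | rfl := IsIdempotentElem.iff_eq_zero_or_one.1 (h x)
    · exact ⟨0, map_zero _⟩
    · exact ⟨1, map_one _⟩
  exact ⟨(RingEquiv.ofBijective _ ⟨ZMod.castHom_injective R, hsurj⟩).symm⟩

section BooleanRing

variable {B : Type*} [BooleanRing B]

theorem exists_ringHom_zmod_two_ker_eq (P : Ideal B) [P.IsPrime] :
    ∃ f : B →+* ZMod 2, RingHom.ker f = P := by
  have hidem (x : B ⧸ P) : IsIdempotentElem x := by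
    obtain ⟨b, rfl⟩ := Ideal.Quotient.mk_surjective x
    exact (BooleanRing.isIdempotentElem b).map (Ideal.Quotient.mk P)
  obtain ⟨e⟩ := nonempty_ringEquiv_zmod_two_of_isIdempotentElem hidem
  refine ⟨e.toRingHom.comp (Ideal.Quotient.mk P), ?_⟩
  rw [RingHom.ker_equiv_comp, Ideal.mk_ker]

variable (B) in
/-- The comparison of the two spectra of a Boolean ring: a homomorphism to `F₂` corresponds to its
kernel, a prime ideal. -/
noncomputable def kerEquivPrimeSpectrum : (B →+* ZMod 2) ≃ PrimeSpectrum B :=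
  Equiv.ofBijective (fun f => ⟨RingHom.ker f, RingHom.ker_isPrime f⟩)
    ⟨fun _ _ h => ker_ringHom_zmod_two_injective (congrArg PrimeSpectrum.asIdeal h),
      fun P => (exists_ringHom_zmod_two_ker_eq P.asIdeal).imp fun _ => PrimeSpectrum.ext⟩

theorem kerEquivPrimeSpectrum_mem_basicOpen_iff {f : B →+* ZMod 2} {b : B} :
    kerEquivPrimeSpectrum B f ∈ PrimeSpectrum.basicOpen b ↔ f b = 1 :=
  zmod_two_ne_zero_iff_eq_one

theorem continuous_kerEquivPrimeSpectrum_symm : Continuous (kerEquivPrimeSpectrum B).symm := by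
  refine continuous_induced_rng.2 <| continuous_pi fun b =>
    continuous_zmod_two_iff_isClopen.2 <| PrimeSpectrum.isClopen_iff.2
      ⟨b, BooleanRing.isIdempotentElem b, Set.ext fun P => ?_⟩
  obtain ⟨f, rfl⟩ := (kerEquivPrimeSpectrum B).surjective P
  simpa using kerEquivPrimeSpectrum_mem_basicOpen_iff.symm

theorem continuous_ringHom_zmod_two_apply (b : B) : Continuous fun f : B →+* ZMod 2 => f b :=
  (continuous_apply b).comp continuous_induced_dom

variable (B) in
/-- The evaluation homomorphism `B → C(spec B, F₂)`, sending `b` to `f ↦ f b`. -/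
def evalRingHom : B →+* C(B →+* ZMod 2, ZMod 2) where
  toFun b := ⟨fun f => f b, continuous_ringHom_zmod_two_apply b⟩
  map_zero' := ContinuousMap.ext map_zero
  map_one' := ContinuousMap.ext map_one
  map_add' a b := ContinuousMap.ext fun f => map_add f a b
  map_mul' a b := ContinuousMap.ext fun f => map_mul f a b

theorem evalRingHom_injective : Function.Injective (evalRingHom B) := by
  intro b c hbc
  refine PrimeSpectrum.basicOpen_injOn_isIdempotentElem (BooleanRing.isIdempotentElem b)
    (BooleanRing.isIdempotentElem c) (SetLike.ext fun P => ?_)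
  obtain ⟨f, rfl⟩ := (kerEquivPrimeSpectrum B).surjective P
  have hf : f b = f c := DFunLike.congr_fun hbc f
  rw [kerEquivPrimeSpectrum_mem_basicOpen_iff, kerEquivPrimeSpectrum_mem_basicOpen_iff, hf]

theorem evalRingHom_surjective : Function.Surjective (evalRingHom B) := by
  intro g
  have hclopen : IsClopen ((kerEquivPrimeSpectrum B).symm ⁻¹' (g ⁻¹' {1})) :=
    (continuous_zmod_two_iff_isClopen.1 g.continuous).preimage
      continuous_kerEquivPrimeSpectrum_symm
  obtain ⟨b, -, hb⟩ := PrimeSpectrum.isClopen_iff.1 hclopen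
  refine ⟨b, ContinuousMap.ext fun f => zmod_two_eq_of_eq_one_iff ?_⟩
  calc
    f b = 1 ↔ kerEquivPrimeSpectrum B f ∈ PrimeSpectrum.basicOpen b :=
      kerEquivPrimeSpectrum_mem_basicOpen_iff.symm
    _ ↔ kerEquivPrimeSpectrum B f ∈ (kerEquivPrimeSpectrum B).symm ⁻¹' (g ⁻¹' {1}) := by
      rw [hb, SetLike.mem_coe]
    _ ↔ g f = 1 := by
      rw [Set.mem_preimage, Equiv.symm_apply_apply, Set.mem_preimage, Set.mem_singleton_iff]

end BooleanRing

/-- Stone duality, one half: for a Boolean ring `B`, the evaluation map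
`B → C(spec B, F₂)`, `b ↦ (f ↦ f b)`, is a ring isomorphism onto the ring of continuous
`F₂`-valued functions on `spec B`. -/
theorem boolean_ring_eval_ringEquiv (B : Type*) [BooleanRing B] :
    ∃ e : B ≃+* C(B →+* ZMod 2, ZMod 2), ∀ (b : B) (f : B →+* ZMod 2), e b f = f b :=
  ⟨RingEquiv.ofBijective (evalRingHom B) ⟨evalRingHom_injective, evalRingHom_surjective⟩,
    fun _ _ => rfl⟩
end

section
/- Let F₂[u,v] be the polynomial ring over F₂ in two variables u, v, and let σ be the F₂-algebra automorphism of F₂[u,v] determined by σ(u) = u + v and σ(v) = v. Then the fixed subalgebra {p ∈ F₂[u,v] : σ(p) = p} is equal to the F₂-subalgebra of F₂[u,v] generated by v and u² + uv. -/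
open MvPolynomial

/-!
In characteristic two `σ` is the reflection `u ↦ v - u`, `v ↦ v`, so it exchanges `u` and `v - u`.
These two elements are polynomial coordinates on `R[u,v]`, over any commutative ring `R`. In them
`σ` is the swap of the two variables, and its invariants are the symmetric polynomials, generated by
the elementary ones `u + (v - u) = v` and `u (v - u)`.
-/

section Equalizer

variable {R A B : Type*} [CommSemiring R] [Semiring A] [Semiring B] [Algebra R A] [Algebra R B]

theorem equalizer_id_eq_map_of_comp_eq (e : A ≃ₐ[R] B) {f : A →ₐ[R] A} {g : B →ₐ[R] B}
    (h : (e : A →ₐ[R] B).comp f = g.comp e) :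
    AlgHom.equalizer g (AlgHom.id R B) =
      (AlgHom.equalizer f (AlgHom.id R A)).map (e : A →ₐ[R] B) := by
  ext b
  obtain ⟨a, rfl⟩ := e.surjective b
  have hg : g (e a) = e (f a) := (DFunLike.congr_fun h a).symm
  simp [hg]

end Equalizer

section Symmetric

theorem symmetricSubalgebra_eq_adjoin_range_esymm (σ R : Type*) [Fintype σ] [CommRing R] {n : ℕ}
    (hn : Fintype.card σ ≤ n) :
    symmetricSubalgebra σ R = Algebra.adjoin R (Set.range fun i : Fin n => esymm σ R (i + 1)) := by
  refine le_antisymm (fun p hp => ?_) (Algebra.adjoin_le ?_)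
  · obtain ⟨q, hq⟩ := esymmAlgHom_surjective R hn ⟨p, hp⟩
    rw [Algebra.adjoin_range_eq_range_aeval]
    exact ⟨q, (esymmAlgHom_apply q).symm.trans (congrArg Subtype.val hq)⟩
  · rintro _ ⟨i, rfl⟩
    exact esymm_isSymmetric σ R (i + 1)

theorem symmetricSubalgebra_fin_two_eq_adjoin (R : Type*) [CommRing R] :
    symmetricSubalgebra (Fin 2) R = Algebra.adjoin R {X 0 + X 1, X 0 * X 1} := by
  have esymm_two : esymm (Fin 2) R 2 = X 0 * X 1 := by
    rw [esymm, ← Fin.prod_univ_two X]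
    exact Finset.sum_singleton _ _
  rw [symmetricSubalgebra_eq_adjoin_range_esymm (Fin 2) R (Fintype.card_fin 2).le]
  congr 1
  ext p
  simp [Fin.exists_fin_two, esymm_two, eq_comm]

theorem symmetricSubalgebra_fin_two_eq_equalizer (R : Type*) [CommSemiring R] :
    symmetricSubalgebra (Fin 2) R =
      AlgHom.equalizer (rename (Equiv.swap 0 1)) (AlgHom.id R (MvPolynomial (Fin 2) R)) := by
  ext p
  refine ⟨fun hp => hp (Equiv.swap 0 1), fun hp e => ?_⟩
  obtain rfl | rfl : e = 1 ∨ e = Equiv.swap 0 1 := by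
    revert e
    decide
  · exact rename_id_apply p
  · exact hp

end Symmetric

section Reflection

variable (R : Type*) [CommRing R]

/-- The linear change of coordinates `u ↦ u`, `v ↦ v - u` of `R[u,v]`, where `u = X 0` and
`v = X 1`. It conjugates the swap of the variables to the reflection `u ↦ v - u`, `v ↦ v`. -/
noncomputable def shear : MvPolynomial (Fin 2) R ≃ₐ[R] MvPolynomial (Fin 2) R :=
  AlgEquiv.ofAlgHom (aeval ![X 0, X 1 - X 0]) (aeval ![X 0, X 0 + X 1])
    (by ext i; fin_cases i <;> simp) (by ext i; fin_cases i <;> simp)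

@[simp]
theorem shear_X_zero : shear R (X 0) = X 0 := by
  simp [shear]

@[simp]
theorem shear_X_one : shear R (X 1) = X 1 - X 0 := by
  simp [shear]

theorem shear_comp_swap :
    (shear R : _ →ₐ[R] MvPolynomial (Fin 2) R).comp (rename (Equiv.swap 0 1)) =
      (aeval ![X 1 - X 0, X 1]).comp (shear R : MvPolynomial (Fin 2) R →ₐ[R] _) := by
  ext i
  fin_cases i <;> simp

theorem fixed_subalgebra_eq_adjoin_general :
    AlgHom.equalizer (aeval ![X 1 - X 0, X 1]) (AlgHom.id R (MvPolynomial (Fin 2) R)) =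
      Algebra.adjoin R {X 1, X 0 * (X 1 - X 0)} := by
  rw [equalizer_id_eq_map_of_comp_eq (shear R) (shear_comp_swap R),
    ← symmetricSubalgebra_fin_two_eq_equalizer, symmetricSubalgebra_fin_two_eq_adjoin,
    AlgHom.map_adjoin]
  simp [Set.image_pair]

end Reflection

/-- In `F₂[u,v]` (with `u = X 0`, `v = X 1`), let `σ` be the algebra endomorphism with
`σ(u) = u + v`, `σ(v) = v` (an automorphism of order 2).  Its fixed subalgebra is the
`F₂`-subalgebra generated by `v` and `u² + uv`. -/
theorem fixed_subalgebra_eq_adjoin :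
    {p : MvPolynomial (Fin 2) (ZMod 2) |
        aeval ![(X 0 + X 1 : MvPolynomial (Fin 2) (ZMod 2)), X 1] p = p} =
      (Algebra.adjoin (ZMod 2)
        {(X 1 : MvPolynomial (Fin 2) (ZMod 2)), X 0 ^ 2 + X 0 * X 1} :
          Subalgebra (ZMod 2) (MvPolynomial (Fin 2) (ZMod 2))) := by
  rw [sq, ← mul_add, add_comm (X 0), ← CharTwo.sub_eq_add]
  exact congrArg SetLike.coe (fixed_subalgebra_eq_adjoin_general (ZMod 2))
end
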